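/- For every even integer n ≥ 1, the number of 123-avoiding involutions of {1,2,…,n} with exactly two fixed points equals the binomial coefficient C(n-1, n/2); for every odd n ≥ 1 this number is 0. -/

import Mathlib

/-- The number of fixed points of a permutation of `Fin n`. -/
def fixedPts {n : ℕ} (π : Equiv.Perm (Fin n)) : ℕ :=
  (Finset.univ.filter fun i => π i = i).card

/-- A permutation is an involution if it is its own inverse. -/
def IsInvolution {n : ℕ} (π : Equiv.Perm (Fin n)) : Prop :=
  ∀ i, π (π i) = i

/-- A permutation of `Fin n` avoids the pattern 123. -/
def Avoids123 {n : ℕ} (π : Equiv.Perm (Fin n)) : Prop :=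
  ¬ ∃ i₁ i₂ i₃ : Fin n, i₁ < i₂ ∧ i₂ < i₃ ∧ (π i₁ < π i₂ ∧ π i₂ < π i₃)

/-- `i_n^k(123)`: the number of 123-avoiding involutions of `{1, …, n}` with exactly
`k` fixed points. -/
noncomputable def iCount123 (n k : ℕ) : ℕ :=
  Nat.card {π : Equiv.Perm (Fin n) // IsInvolution π ∧ Avoids123 π ∧ fixedPts π = k}

def RevOn {n : ℕ} (π : Equiv.Perm (Fin n)) (S : Finset (Fin n)) : Prop :=
  (∀ x ∈ S, π x ∈ S) ∧ ∀ x ∈ S, ∀ y ∈ S, x < y → π y < π x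

def RevP {n : ℕ} (π : Equiv.Perm (Fin n)) (E : Finset (Fin n)) : Prop :=
  IsInvolution π ∧ RevOn π E ∧ RevOn π Eᶜ

def lrm {n : ℕ} (π : Equiv.Perm (Fin n)) : Finset (Fin n) :=
  Finset.univ.filter fun x => ∀ y, y < x → ¬ π y < π x

def StarC {n : ℕ} (m : ℕ) (E : Finset (Fin n)) : Prop :=
  ∀ t : ℕ, t < m → (E.filter fun x => n ≤ x.val + t).card < (E.filter fun x => x.val ≤ t).card

theorem exists_rev (α : Type) [Fintype α] [LinearOrder α] :
    ∃ r : Equiv.Perm α, (∀ x, r (r x) = x) ∧ ∀ x y, x < y → r y < r x := by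
  let e := Fintype.orderIsoFinOfCardEq α rfl
  refine ⟨(e.symm.toEquiv.trans Fin.revPerm).trans e.toEquiv, ?_, ?_⟩
  · intro x; simp
  · intro x y h; simpa using h

theorem exists_revP {n : ℕ} (E : Finset (Fin n)) : ∃ π, RevP π E := by
  obtain ⟨r, hr, hr'⟩ := exists_rev {x // x ∈ E}
  obtain ⟨s, hs, hs'⟩ := exists_rev {x // ¬ x ∈ E}
  let π := Equiv.Perm.subtypeCongr r s
  have h1 : ∀ x (h : x ∈ E), π x = (r ⟨x, h⟩ : Fin n) := fun x h =>
    Equiv.Perm.subtypeCongr.left_apply r s h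
  have h2 : ∀ x (h : ¬ x ∈ E), π x = (s ⟨x, h⟩ : Fin n) := fun x h =>
    Equiv.Perm.subtypeCongr.right_apply r s h
  refine ⟨π, ?_, ⟨?_, ?_⟩, ?_, ?_⟩
  · intro x
    by_cases h : x ∈ E
    · rw [h1 x h, h1 _ (r ⟨x, h⟩).2]; simp [hr]
    · rw [h2 x h, h2 _ (s ⟨x, h⟩).2]; simp [hs]
  · intro x h; rw [h1 x h]; exact (r ⟨x, h⟩).2
  · intro x h y h' hxy; rw [h1 x h, h1 y h']; exact hr' ⟨x, h⟩ ⟨y, h'⟩ hxy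
  · intro x h; rw [Finset.mem_compl] at *; rw [h2 x h]; exact (s ⟨x, h⟩).2
  · intro x h y h' hxy; rw [Finset.mem_compl] at *
    rw [h2 x h, h2 y h']; exact hs' ⟨x, h⟩ ⟨y, h'⟩ hxy

theorem RevOn.lt_iff {n : ℕ} {π : Equiv.Perm (Fin n)} {S : Finset (Fin n)} (h : RevOn π S)
    {x y : Fin n} (hx : x ∈ S) (hy : y ∈ S) : π y < π x ↔ x < y := by
  constructor
  · intro hl
    rcases lt_trichotomy x y with h1 | h1 | h1
    · exact h1
    · subst h1; exact absurd hl (lt_irrefl _)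
    · exact absurd hl (lt_asymm (h.2 y hy x hx h1))
  · exact h.2 x hx y hy

theorem RevOn.count {n : ℕ} {π : Equiv.Perm (Fin n)} {S : Finset (Fin n)} (hi : IsInvolution π)
    (h : RevOn π S) {x : Fin n} (hx : x ∈ S) :
    (S.filter fun e => e < x).card = (S.filter fun e => π x < e).card := by
  apply Finset.card_bij' (fun a _ => π a) (fun a _ => π a)
  · intro a ha; rw [Finset.mem_filter] at *
    exact ⟨h.1 a ha.1, h.2 a ha.1 x hx ha.2⟩
  · intro a ha; rw [Finset.mem_filter] at *
    refine ⟨h.1 a ha.1, ?_⟩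
    have := h.2 _ (h.1 x hx) _ ha.1 ha.2
    rwa [hi x] at this
  · intro a _; exact hi a
  · intro a _; exact hi a

theorem RevOn.unique {n : ℕ} {π σ : Equiv.Perm (Fin n)} {S : Finset (Fin n)}
    (hi : IsInvolution π) (hj : IsInvolution σ)
    (h : RevOn π S) (h' : RevOn σ S) {x : Fin n} (hx : x ∈ S) : π x = σ x := by
  have e := (h.count hi hx).symm.trans (h'.count hj hx)
  have key : ∀ a b : Fin n, a ∈ S → b ∈ S → a < b →
      (S.filter fun e => b < e).card < (S.filter fun e => a < e).card := by
    intro a b _ hb hab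
    apply Finset.card_lt_card
    rw [Finset.ssubset_iff_of_subset]
    · exact ⟨b, by simp [hb, hab], by simp⟩
    · intro z hz; rw [Finset.mem_filter] at *; exact ⟨hz.1, hab.trans hz.2⟩
  rcases lt_trichotomy (π x) (σ x) with h1 | h1 | h1
  · have := key _ _ (h.1 x hx) (h'.1 x hx) h1; omega
  · exact h1
  · have := key _ _ (h'.1 x hx) (h.1 x hx) h1; omega

theorem RevP.unique {n : ℕ} {π σ : Equiv.Perm (Fin n)} {E : Finset (Fin n)}
    (h : RevP π E) (h' : RevP σ E) : π = σ := by
  ext1 x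
  by_cases hx : x ∈ E
  · exact h.2.1.unique h.1 h'.1 h'.2.1 hx
  · exact h.2.2.unique h.1 h'.1 h'.2.2 (Finset.mem_compl.2 hx)

theorem RevP.avoids {n : ℕ} {π : Equiv.Perm (Fin n)} {E : Finset (Fin n)}
    (h : RevP π E) : Avoids123 π := by
  rintro ⟨a, b, c, hab, hbc, h1, h2⟩
  have k1 := h.2.1.2
  have k2 := h.2.2.2
  simp only [Finset.mem_compl] at k2
  have hac := hab.trans hbc
  have h3 := h1.trans h2
  by_cases ha : a ∈ E <;> by_cases hb : b ∈ E <;> by_cases hc : c ∈ E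
  all_goals first
    | exact lt_asymm h1 (k1 a ha b hb hab)
    | exact lt_asymm h2 (k1 b hb c hc hbc)
    | exact lt_asymm h3 (k1 a ha c hc hac)
    | exact lt_asymm h1 (k2 a ha b hb hab)
    | exact lt_asymm h2 (k2 b hb c hc hbc)
    | exact lt_asymm h3 (k2 a ha c hc hac)

theorem RevOn.fixed {n : ℕ} {π : Equiv.Perm (Fin n)} {S : Finset (Fin n)} (hi : IsInvolution π)
    (h : RevOn π S) : (S.filter fun x => π x = x).card = S.card % 2 := by
  have le1 : (S.filter fun x => π x = x).card ≤ 1 := by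
    rw [Finset.card_le_one]
    intro a ha b hb
    rw [Finset.mem_filter] at ha hb
    by_contra hne
    rcases lt_or_gt_of_ne hne with h1 | h1
    · have := h.2 a ha.1 b hb.1 h1; rw [ha.2, hb.2] at this; exact lt_asymm h1 this
    · have := h.2 b hb.1 a ha.1 h1; rw [ha.2, hb.2] at this; exact lt_asymm h1 this
  have ev : ((S.filter fun x => ¬ π x = x).card : ZMod 2) = 0 := by
    rw [Finset.card_eq_sum_ones, Nat.cast_sum]
    apply Finset.sum_involution (fun a _ => π a)
    · intro a _; decide
    · intro a ha _; exact (Finset.mem_filter.1 ha).2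
    · intro a ha; rw [Finset.mem_filter] at *
      refine ⟨h.1 a ha.1, ?_⟩
      rw [hi a]; exact fun e => ha.2 e.symm
    · intro a _; exact hi a
  rw [ZMod.natCast_eq_zero_iff] at ev
  have := Finset.card_filter_add_card_filter_not (s := S) (fun x => π x = x)
  omega

theorem RevP.fixed {n : ℕ} {π : Equiv.Perm (Fin n)} {E : Finset (Fin n)}
    (h : RevP π E) : fixedPts π = E.card % 2 + Eᶜ.card % 2 := by
  rw [← h.2.1.fixed h.1, ← h.2.2.fixed h.1, fixedPts,
    ← Finset.card_union_of_disjoint, ← Finset.filter_union, Finset.union_compl]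
  exact Finset.disjoint_filter_filter disjoint_compl_right

theorem revP_lrm {n : ℕ} {π : Equiv.Perm (Fin n)} (hi : IsInvolution π) (ha : Avoids123 π) :
    RevP π (lrm π) := by
  have hm : ∀ x, π x ∈ lrm π → x ∈ lrm π := by
    intro x hx
    simp only [lrm, Finset.mem_filter, Finset.mem_univ, true_and] at *
    intro y hy hl
    apply hx (π y) hl
    rwa [hi, hi]
  refine ⟨hi, ⟨?_, ?_⟩, ?_, ?_⟩
  · intro x hx; apply hm; rwa [hi]
  · intro x hx y hy hxy
    simp only [lrm, Finset.mem_filter, Finset.mem_univ, true_and] at *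
    exact lt_of_le_of_ne (not_lt.1 (hy x hxy)) (fun e => hxy.ne' (π.injective e))
  · intro x hx; rw [Finset.mem_compl] at *; exact fun h => hx (hm x h)
  · intro x hx y hy hxy
    simp only [lrm, Finset.mem_compl, Finset.mem_filter, Finset.mem_univ, true_and] at hx hy
    push Not at hx
    obtain ⟨z, hz, hz'⟩ := hx
    by_contra hc
    have : π x < π y := lt_of_le_of_ne (not_lt.1 hc) (fun e => hxy.ne (π.injective e))
    exact ha ⟨z, x, y, hz, hxy, hz', this⟩

theorem count_lt {n : ℕ} (E : Finset (Fin n)) (t : ℕ) (ht : t ≤ n) :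
    (E.filter fun x => x.val < t).card + (Eᶜ.filter fun x => x.val < t).card = t := by
  rw [← Finset.card_union_of_disjoint (Finset.disjoint_filter_filter disjoint_compl_right),
    ← Finset.filter_union, Finset.union_compl]
  rw [Fin.card_filter_val_lt]; omega

theorem count_ge {n : ℕ} (E : Finset (Fin n)) (t : ℕ) (ht : t ≤ n) :
    (E.filter fun x => n ≤ x.val + t).card + (Eᶜ.filter fun x => n ≤ x.val + t).card = t := by
  rw [← Finset.card_union_of_disjoint (Finset.disjoint_filter_filter disjoint_compl_right),
    ← Finset.filter_union, Finset.union_compl]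
  have h1 := Finset.card_filter_add_card_filter_not (s := (Finset.univ : Finset (Fin n)))
    (fun x => x.val < n - t)
  rw [Fin.card_filter_val_lt, Finset.card_univ, Fintype.card_fin] at h1
  have : (Finset.univ.filter fun x : Fin n => n ≤ x.val + t)
      = (Finset.univ.filter fun x : Fin n => ¬ x.val < n - t) := by
    apply Finset.filter_congr; intro x _; omega
  rw [this]; omega

theorem star_lrm {n : ℕ} {π : Equiv.Perm (Fin n)} (hi : IsInvolution π) (ha : Avoids123 π) :
    StarC n (lrm π) := by
  have hR := revP_lrm hi ha
  have hmem : ∀ x, x ∈ lrm π ↔ ∀ y, y < x → ¬ π y < π x := by intro x; simp [lrm]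
  generalize lrm π = E at hR hmem
  intro t
  -- weak inequality from the previous step
  have weak : ∀ t, t < n → (∀ s, s + 1 = t → (E.filter fun x => n ≤ x.val + s).card <
      (E.filter fun x => x.val ≤ s).card) →
      (E.filter fun x => n ≤ x.val + t).card ≤ (E.filter fun x => x.val < t).card := by
    intro t ht hs
    cases t with
    | zero =>
      have : (E.filter fun x => n ≤ x.val + 0) = ∅ := by
        apply Finset.filter_false_of_mem; intro x _; omega
      rw [this]; simp
    | succ s =>
      have h1 := hs s rfl
      have h2 : (E.filter fun x => n ≤ x.val + (s+1)) ⊆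
          insert (⟨n - (s+1), by omega⟩ : Fin n) (E.filter fun x => n ≤ x.val + s) := by
        intro x hx
        simp only [Finset.mem_insert, Finset.mem_filter, Fin.ext_iff] at *
        by_cases hh : x.val = n - (s+1)
        · exact Or.inl hh
        · exact Or.inr ⟨hx.1, by omega⟩
      have h3 := (Finset.card_le_card h2).trans (Finset.card_insert_le _ _)
      have h4 : (E.filter fun x => x.val < s + 1) = (E.filter fun x => x.val ≤ s) := by
        apply Finset.filter_congr; intro x _; omega
      rw [h4]; omega
  have main : ∀ t, t < n →
      (E.filter fun x => n ≤ x.val + t).card ≤ (E.filter fun x => x.val < t).card →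
      (E.filter fun x => n ≤ x.val + t).card < (E.filter fun x => x.val ≤ t).card := by
    intro t ht hw
    have hsub : (E.filter fun x => x.val < t) ⊆ (E.filter fun x => x.val ≤ t) := by
      intro x hx; rw [Finset.mem_filter] at *; exact ⟨hx.1, hx.2.le⟩
    by_cases hE : (⟨t, ht⟩ : Fin n) ∈ E
    · refine lt_of_le_of_lt hw (Finset.card_lt_card ?_)
      rw [Finset.ssubset_iff_of_subset hsub]
      exact ⟨⟨t, ht⟩, by simp [hE], by simp⟩
    · refine lt_of_lt_of_le (lt_of_le_of_ne hw ?_) (Finset.card_le_card hsub)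
      intro heq
      obtain ⟨e, he, hpe⟩ : ∃ e, e < (⟨t, ht⟩ : Fin n) ∧ π e < π ⟨t, ht⟩ := by
        by_contra hcon
        exact hE ((hmem _).2 fun y hy hl => hcon ⟨y, hy, hl⟩)
      have heE : e ∈ E := by
        rw [hmem]; intro z hz hl
        exact ha ⟨z, e, _, hz, he, hl, hpe⟩
      have c1 := hR.2.1.count hi heE
      have c2 := hR.2.2.count hi (Finset.mem_compl.2 hE)
      have c3 : (E.filter fun x => x < e).card < (E.filter fun x => x.val < t).card := by
        apply Finset.card_lt_card
        rw [Finset.ssubset_iff_of_subset]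
        · exact ⟨e, Finset.mem_filter.2 ⟨heE, Fin.lt_def.1 he⟩, by simp⟩
        · intro x hx; rw [Finset.mem_filter] at *
          exact ⟨hx.1, lt_trans (Fin.lt_def.1 hx.2) (Fin.lt_def.1 he)⟩
      have c4 : n ≤ (π e).val + t := by
        by_contra hcon
        have : (E.filter fun x => n ≤ x.val + t) ⊆ (E.filter fun x => π e < x) := by
          intro x hx; rw [Finset.mem_filter] at *
          exact ⟨hx.1, Fin.lt_def.2 (by omega)⟩
        have := Finset.card_le_card this
        omega
      have c5 : (Eᶜ.filter fun x => π ⟨t, ht⟩ < x).card <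
          (Eᶜ.filter fun x => n ≤ x.val + t).card := by
        apply Finset.card_lt_card
        have hpe' := Fin.lt_def.1 hpe
        rw [Finset.ssubset_iff_of_subset]
        · refine ⟨π ⟨t, ht⟩, ?_, by simp⟩
          rw [Finset.mem_filter]
          exact ⟨hR.2.2.1 _ (Finset.mem_compl.2 hE), by omega⟩
        · intro x hx; rw [Finset.mem_filter] at *
          have := Fin.lt_def.1 hx.2
          exact ⟨hx.1, by omega⟩
      have c6 : (Eᶜ.filter fun x => x < (⟨t, ht⟩ : Fin n)) = (Eᶜ.filter fun x => x.val < t) := by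
        apply Finset.filter_congr; intro x _; exact Fin.lt_def
      rw [c6] at c2
      have := count_lt E t ht.le
      have := count_ge E t ht.le
      omega
  induction t with
  | zero => exact fun ht => main 0 ht (weak 0 ht (by intro s hs; omega))
  | succ t ih =>
    intro ht
    refine main _ ht (weak _ ht ?_)
    intro s hs
    obtain rfl : s = t := by omega
    exact ih (by omega)

theorem noSW_count {n : ℕ} {π : Equiv.Perm (Fin n)} {E : Finset (Fin n)} (h : RevP π E)
    {c : Fin n} (hc : c ∉ E) (hno : ∀ e ∈ E, e < c → ¬ π e < π c) :
    c.val + (π c).val < n ∧ ∀ m, StarC m E → m ≤ c.val := by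
  have hle : (E.filter fun x => x.val < c.val).card ≤ (E.filter fun x => π c < x).card := by
    apply Finset.card_le_card_of_injOn (fun x => π x)
    · intro x hx
      simp only [Finset.coe_filter, Set.mem_ofPred_eq] at *
      refine ⟨h.2.1.1 x hx.1, ?_⟩
      refine lt_of_le_of_ne (not_lt.1 (hno x hx.1 hx.2)) ?_
      intro e
      have := π.injective e
      rw [this] at hc; exact hc hx.1
    · exact π.injective.injOn
  have c2 := h.2.2.count h.1 (Finset.mem_compl.2 hc)
  have c6 : (Eᶜ.filter fun x => x < c) = (Eᶜ.filter fun x => x.val < c.val) := by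
    apply Finset.filter_congr; intro x _; exact Fin.lt_def
  rw [c6] at c2
  have g : ∀ S : Finset (Fin n), (S.filter fun x => π c < x) =
      (S.filter fun x => n ≤ x.val + (n - 1 - (π c).val)) := by
    intro S
    apply Finset.filter_congr; intro x _; rw [Fin.lt_def]; omega
  have hlt := (π c).2
  have c7 := count_ge E (n - 1 - (π c).val) (by omega)
  rw [← g, ← g] at c7
  have c8 := count_lt E c.val c.2.le
  have first : c.val + (π c).val < n := by omega
  refine ⟨first, ?_⟩
  intro m hs
  by_contra hm
  have s1 := hs c.val (by omega)
  have s2 : (E.filter fun x => x.val ≤ c.val) = (E.filter fun x => x.val < c.val) := by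
    apply Finset.filter_congr; intro x hx
    have : x.val ≠ c.val := fun e => hc (Fin.ext e ▸ hx)
    omega
  rw [s2] at s1
  have c9 := count_ge E c.val c.2.le
  have c10 : (Eᶜ.filter fun x => n ≤ x.val + c.val).card ≤ (Eᶜ.filter fun x => π c < x).card := by
    apply Finset.card_le_card
    intro x hx; rw [Finset.mem_filter] at *
    exact ⟨hx.1, Fin.lt_def.2 (by omega)⟩
  omega

theorem exists_SW {n m : ℕ} (hn : n = m + m) {π : Equiv.Perm (Fin n)} {E : Finset (Fin n)}
    (h : RevP π E) (hs : StarC m E)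
    {c : Fin n} (hc : c ∉ E) : ∃ e ∈ E, e < c ∧ π e < π c := by
  by_contra hcon
  have hno : ∀ e ∈ E, e < c → ¬ π e < π c := fun e he h1 h2 => hcon ⟨e, he, h1, h2⟩
  have hc' : π c ∉ E := Finset.mem_compl.1 (h.2.2.1 c (Finset.mem_compl.2 hc))
  have hno' : ∀ e ∈ E, e < π c → ¬ π e < π (π c) := by
    intro e he h1 h2
    rw [h.1 c] at h2
    exact hcon ⟨π e, h.2.1.1 e he, h2, by rwa [h.1 e]⟩
  have r1 := noSW_count h hc hno
  have r2 := noSW_count h hc' hno'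
  have := r1.2 m hs
  have := r2.2 m hs
  omega

theorem eq_lrm {n m : ℕ} (hn : n = m + m) {π : Equiv.Perm (Fin n)} {E : Finset (Fin n)}
    (h : RevP π E) (hs : StarC m E) : E = lrm π := by
  ext x
  simp only [lrm, Finset.mem_filter, Finset.mem_univ, true_and]
  constructor
  · intro hx y hy hl
    have key : ∀ z ∈ E, z < x → ¬ π z < π x := fun z hz h1 h2 =>
      lt_asymm h2 (h.2.1.2 z hz x hx h1)
    by_cases hyE : y ∈ E
    · exact key y hyE hy hl
    · obtain ⟨e, he, h1, h2⟩ := exists_SW hn h hs hyE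
      exact key e he (h1.trans hy) (h2.trans hl)
  · intro hx
    by_contra hxE
    obtain ⟨e, he, h1, h2⟩ := exists_SW hn h hs hxE
    exact hx e h1 h2

theorem iCount_eq (m : ℕ) : iCount123 (m + m) 2 =
    Nat.card {E : Finset (Fin (m + m)) // StarC m E ∧ Odd E.card} := by
  unfold iCount123
  have hfix : ∀ (π : Equiv.Perm (Fin (m+m))) (E : Finset (Fin (m+m))), RevP π E →
      (fixedPts π = 2 ↔ Odd E.card) := by
    intro π E h
    rw [h.fixed, Finset.card_compl, Fintype.card_fin, Nat.odd_iff]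
    have := Finset.card_le_univ E
    rw [Fintype.card_fin] at this
    omega
  apply Nat.card_congr
  refine Equiv.ofBijective (fun p => ⟨lrm p.1, ?_, ?_⟩) ⟨?_, ?_⟩
  · intro t ht; exact star_lrm p.2.1 p.2.2.1 t (by omega)
  · exact (hfix _ _ (revP_lrm p.2.1 p.2.2.1)).1 p.2.2.2
  · rintro ⟨p, hp⟩ ⟨q, hq⟩ hpq
    have e : lrm p = lrm q := congrArg Subtype.val hpq
    have h1 := revP_lrm hp.1 hp.2.1
    rw [e] at h1
    exact Subtype.ext (h1.unique (revP_lrm hq.1 hq.2.1))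
  · rintro ⟨E, hs, ho⟩
    obtain ⟨π, hπ⟩ := exists_revP E
    exact ⟨⟨π, hπ.1, hπ.avoids, (hfix _ _ hπ).2 ho⟩, Subtype.ext (eq_lrm rfl hπ hs).symm⟩

theorem odd_case (n : ℕ) (hn : Odd n) : iCount123 n 2 = 0 := by
  unfold iCount123
  rw [Nat.card_eq_zero]
  left
  constructor
  rintro ⟨π, hi, ha, hf⟩
  have := (revP_lrm hi ha).fixed
  rw [hf, Finset.card_compl, Fintype.card_fin] at this
  have h2 := Finset.card_le_univ (lrm π)
  rw [Fintype.card_fin] at h2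
  rw [Nat.odd_iff] at hn
  omega

def bz (b : Bool) : ℤ := if b then 1 else 0

def PP (m : ℕ) (h : ℤ) (f : Fin m → Bool × Bool) : Prop :=
  (∀ t : Fin m, 0 < h + (∑ s : Fin m, if s ≤ t then bz (f s).1 else 0)
    - ∑ s : Fin m, if s < t then bz (f s).2 else 0) ∧
  Odd (h + (∑ s : Fin m, bz (f s).1) - ∑ s : Fin m, bz (f s).2)

theorem PP_succ (m : ℕ) (h : ℤ) (a : Bool × Bool) (f : Fin m → Bool × Bool) :
    PP (m+1) h (Fin.cons a f : Fin (m+1) → Bool × Bool) ↔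
      0 < h + bz a.1 ∧ PP m (h + bz a.1 - bz a.2) f := by
  unfold PP
  rw [Fin.forall_fin_succ]
  simp only [Fin.sum_univ_succ, Fin.cons_zero, Fin.cons_succ, Fin.succ_le_succ_iff,
    Fin.succ_lt_succ_iff, Fin.zero_le, Fin.succ_pos, if_true, Fin.not_lt_zero, if_false,
    Fin.le_zero_iff, Fin.succ_ne_zero, Finset.sum_const_zero, add_zero,
    sub_zero]
  rw [and_assoc]
  refine and_congr Iff.rfl (and_congr ?_ ?_)
  · apply forall_congr'; intro t
    rw [show ∀ a b c d e : ℤ, a + (b + c) - (d + e) = a + b - d + c - e by intros; ring]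
  · rw [show ∀ a b c d e : ℤ, a + (b + c) - (d + e) = a + b - d + c - e by intros; ring]

noncomputable def BB (m : ℕ) (h : ℤ) : ℕ := Nat.card {f : Fin m → Bool × Bool // PP m h f}

theorem BB_zero (h : ℤ) : BB 0 h = if Odd h then 1 else 0 := by
  unfold BB
  have : ∀ f : Fin 0 → Bool × Bool, PP 0 h f ↔ Odd h := by intro f; simp [PP]
  simp only [this]
  split_ifs with hh
  · simp [hh]
  · simp [hh]

theorem BB_succ (m : ℕ) (h : ℤ) : BB (m+1) h =
    (if 0 < h + 1 then BB m h + BB m (h+1) else 0) + (if 0 < h then BB m (h-1) + BB m h else 0) := by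
  classical
  unfold BB
  have e1 : Nat.card {f : Fin (m+1) → Bool × Bool // PP (m+1) h f} =
      Nat.card {p : (Bool × Bool) × (Fin m → Bool × Bool) //
        0 < h + bz p.1.1 ∧ PP m (h + bz p.1.1 - bz p.1.2) p.2} := by
    apply Nat.card_congr
    refine ((Fin.consEquiv (fun _ => Bool × Bool)).subtypeEquiv ?_).symm
    intro p
    exact (PP_succ m h p.1 p.2).symm
  rw [e1]
  simp only [Nat.card_eq_fintype_card, Fintype.card_subtype]
  simp only [Finset.card_filter]
  rw [Fintype.sum_prod_type, Fintype.sum_prod_type]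
  simp only [Fintype.sum_bool, bz, if_true, Bool.false_eq_true, if_false, add_zero, sub_zero,
    add_sub_cancel_right]
  split_ifs with h1 h2 h2 <;> simp [h1, h2]

theorem choose_two (n k : ℕ) : (n+2).choose (k+2) = n.choose (k+2) + 2 * n.choose (k+1) + n.choose k := by
  rw [Nat.choose_succ_succ (n+1) (k+1), Nat.choose_succ_succ n k, Nat.choose_succ_succ n (k+1)]
  ring

theorem BB_rec0 (m : ℕ) : BB (m+1) 0 = BB m 0 + BB m 1 := by rw [BB_succ]; simp

theorem BB_rec (m h : ℕ) : BB (m+1) ((h + 1 : ℕ) : ℤ) =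
    BB m ((h + 2 : ℕ) : ℤ) + 2 * BB m ((h+1 : ℕ) : ℤ) + BB m (h : ℤ) := by
  rw [BB_succ, if_pos (by positivity), if_pos (by positivity)]
  rw [show ((h + 1 : ℕ) : ℤ) + 1 = ((h + 2 : ℕ) : ℤ) by push_cast; ring,
    show ((h + 1 : ℕ) : ℤ) - 1 = (h : ℤ) by push_cast; ring]
  ring

theorem BB_formula (m : ℕ) : BB (m+1) 0 = (2*m+1).choose (m+1) ∧
    ∀ h : ℕ, BB (m+1) ((h+1 : ℕ) : ℤ) = BB (m+1) (h : ℤ) + (2*m+2).choose (m+2+h) := by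
  induction m with
  | zero =>
    have z : ∀ h : ℕ, BB 0 (h : ℤ) = h % 2 := by
      intro h
      rw [BB_zero]
      have : Odd (h : ℤ) ↔ h % 2 = 1 := by rw [Int.odd_iff]; omega
      simp only [this]
      split_ifs <;> omega
    have z0 := z 0
    have z1 := z 1
    push_cast at z0 z1
    constructor
    · rw [BB_rec0, z0, z1]; simp
    · intro h
      cases h with
      | zero =>
        rw [BB_rec, z, z, z, Nat.cast_zero, BB_rec0, z0, z1]; simp
      | succ h =>
        rw [BB_rec, BB_rec, z, z, z, z]
        rw [Nat.choose_eq_zero_of_lt (by omega)]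
        omega
  | succ m ih =>
    obtain ⟨i0, i1⟩ := ih
    have a0 := i1 0
    have a1 := i1 1
    norm_num at a0 a1
    have p : (2*m+2).choose (m+1) = 2 * (2*m+1).choose (m+1) := by
      rw [Nat.choose_succ_succ (2*m+1) m]
      have := Nat.choose_symm_half m
      rw [Nat.succ_eq_add_one]
      omega
    constructor
    · rw [BB_rec0, a0, i0]
      rw [show 2 * (m+1) + 1 = (2*m+2) + 1 by ring, Nat.choose_succ_succ (2*m+2) (m+1), p]
      ring
    · intro h
      have q := choose_two (2*m+2) (m+1+h)
      cases h with
      | zero =>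
        rw [BB_rec (m+1), Nat.cast_zero, BB_rec0 (m+1)]
        norm_num
        rw [a1, a0, i0]
        rw [show 2*(m+1)+2 = 2*m+2+2 by ring]
        simp only [add_zero] at q
        rw [show m + 1 + 2 = m+2+1 by ring] at *
        rw [q, p]
        ring
      | succ h =>
        rw [BB_rec (m+1), BB_rec (m+1), i1 (h+2), i1 (h+1), i1 h]
        rw [show 2*(m+1)+2 = 2*m+2+2 by ring, show m + 1 + 2 + (h+1) = m + 1 + (h+1) + 2 by ring, q]
        rw [show m + 2 + (h+2) = m + 1 + (h+1) + 2 by ring, show m + 2 + (h+1) = m + 1 + (h+1) + 1 by ring,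
          show m + 2 + h = m + 1 + (h+1) by ring]
        ring

theorem card_filter_bz {n : ℕ} (w : Fin n → Bool) (p : Fin n → Prop) [DecidablePred p] :
    ((((Finset.univ.filter fun x => w x = true).filter p).card : ℕ) : ℤ)
      = ∑ x, if p x then bz (w x) else 0 := by
  rw [Finset.filter_filter, Finset.card_filter]
  push_cast
  apply Finset.sum_congr rfl
  intro x _
  by_cases h : w x = true <;> by_cases h' : p x <;> simp [h, h', bz]

theorem star_iff (m : ℕ) (w : Fin (m+m) → Bool) :
    (StarC m (Finset.univ.filter fun x => w x = true) ∧
      Odd (Finset.univ.filter fun x => w x = true).card) ↔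
    PP m 0 (fun s => (w (Fin.castAdd m s), w (Fin.natAdd m (Fin.rev s)))) := by
  unfold StarC PP
  apply and_congr
  · rw [Fin.forall_iff]
    apply forall_congr'; intro t
    apply forall_congr'; intro ht
    rw [← Int.ofNat_lt]
    rw [card_filter_bz, card_filter_bz, zero_add, sub_pos, Fin.sum_univ_add, Fin.sum_univ_add]
    have e1 : ∑ i : Fin m, (if m + m ≤ (Fin.castAdd m i).val + t then bz (w (Fin.castAdd m i)) else 0) = 0 := by
      apply Finset.sum_eq_zero; intro i _
      rw [if_neg]; simp; omega
    have e2 : ∑ i : Fin m, (if (Fin.natAdd m i).val ≤ t then bz (w (Fin.natAdd m i)) else 0) = 0 := by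
      apply Finset.sum_eq_zero; intro i _
      rw [if_neg]; simp; omega
    rw [e1, e2, zero_add, add_zero]
    rw [← Equiv.sum_comp Fin.revPerm]
    have e3 : ∀ i : Fin m, (m + m ≤ (Fin.natAdd m (Fin.revPerm i)).val + t) ↔ i < ⟨t, ht⟩ := by
      intro i; rw [Fin.lt_def]; simp [Fin.val_rev]; omega
    have e4 : ∀ i : Fin m, ((Fin.castAdd m i).val ≤ t) ↔ i ≤ ⟨t, ht⟩ := by
      intro i; rw [Fin.le_def]; simp
    simp only [e3, e4]
    simp only [Fin.revPerm_apply]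
  · have := card_filter_bz w (fun _ => True)
    simp only [Finset.filter_true, if_true] at this
    rw [← Int.odd_coe_nat, this, zero_add, Fin.sum_univ_add,
      ← Equiv.sum_comp Fin.revPerm (fun i => bz (w (Fin.natAdd m i)))]
    simp only [Fin.revPerm_apply]
    rw [Int.odd_add, Int.odd_sub]

theorem card_star (m : ℕ) :
    Nat.card {E : Finset (Fin (m + m)) // StarC m E ∧ Odd E.card} = BB m 0 := by
  unfold BB
  let e1 : (Fin (m+m) → Bool) ≃ Finset (Fin (m+m)) :=
    { toFun := fun w => Finset.univ.filter fun x => w x = true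
      invFun := fun E x => decide (x ∈ E)
      left_inv := by intro w; ext x; simp
      right_inv := by intro E; ext x; simp }
  let e2 : (Fin (m+m) → Bool) ≃ (Fin m → Bool × Bool) :=
    { toFun := fun w s => (w (Fin.castAdd m s), w (Fin.natAdd m (Fin.rev s)))
      invFun := fun f => Fin.append (fun s => (f s).1) (fun s => (f (Fin.rev s)).2)
      left_inv := by
        intro w; funext x
        refine Fin.addCases (fun i => ?_) (fun i => ?_) x
        · beta_reduce; rw [Fin.append_left]
        · beta_reduce; rw [Fin.append_right, Fin.rev_rev]
      right_inv := by intro f; funext s; beta_reduce; rw [Fin.append_left, Fin.append_right, Fin.rev_rev] }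
  apply Nat.card_congr
  refine (e1.subtypeEquiv (p := fun w => PP m 0 (e2 w)) ?_).symm.trans (e2.subtypeEquiv ?_)
  · intro w; exact (star_iff m w).symm
  · intro w; exact Iff.rfl

/-- For every even `n ≥ 1`, the number of 123-avoiding involutions of `{1, …, n}` with
exactly two fixed points equals `C(n-1, n/2)`; for every odd `n ≥ 1` this number is `0`. -/
theorem statement1 (n : ℕ) (hn : 1 ≤ n) :
    (Even n → iCount123 n 2 = (n - 1).choose (n / 2)) ∧
    (Odd n → iCount123 n 2 = 0) := by
  refine ⟨?_, odd_case n⟩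
  rintro ⟨m, rfl⟩
  rw [iCount_eq, card_star]
  obtain ⟨k, rfl⟩ : ∃ k, m = k + 1 := ⟨m - 1, by omega⟩
  rw [(BB_formula k).1]
  congr 1 <;> omega
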